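/- Derivation of the post-selected entropy inequality of Example 3 (Pienaar's inequality): for any jointly distributed finite random variables X0, X1, Y0, Y1, Z satisfying I((X1, Z) : Y1) ≤ H(Z | X0), the inequality I(X0 : Z) - I(Y0 : Z) - I(X1 : Z) + I(Y1 : Z) ≤ H(Z) holds, where H denotes Shannon entropy, H(·|·) conditional entropy and I mutual information. -/

import Mathlib

open MeasureTheory ProbabilityTheory

/-- Shannon entropy of a finite-valued random variable `X` under the measure `μ`. -/
noncomputable def entH {Ω E : Type*} [MeasurableSpace Ω] [Fintype E]
    (μ : Measure Ω) (X : Ω → E) : ℝ :=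
  ∑ e : E, Real.negMulLog (μ (X ⁻¹' {e})).toReal

/-- Mutual information `I(X : Y)`. -/
noncomputable def mutInf {Ω E F : Type*} [MeasurableSpace Ω] [Fintype E] [Fintype F]
    (μ : Measure Ω) (X : Ω → E) (Y : Ω → F) : ℝ :=
  entH μ X + entH μ Y - entH μ (fun ω => (X ω, Y ω))

/-- Conditional Shannon entropy `H(X | Y)`. -/
noncomputable def condEnt {Ω E F : Type*} [MeasurableSpace Ω] [Fintype E] [Fintype F]
    (μ : Measure Ω) (X : Ω → E) (Y : Ω → F) : ℝ :=
  entH μ (fun ω => (X ω, Y ω)) - entH μ Y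

/-- Conditional mutual information `I(X : Y | Z)`. -/
noncomputable def condMutInf {Ω E F G : Type*} [MeasurableSpace Ω]
    [Fintype E] [Fintype F] [Fintype G]
    (μ : Measure Ω) (X : Ω → E) (Y : Ω → F) (Z : Ω → G) : ℝ :=
  entH μ (fun ω => (X ω, Z ω)) + entH μ (fun ω => (Y ω, Z ω))
    - entH μ (fun ω => (X ω, Y ω, Z ω)) - entH μ Z

/-!
By the chain rule and the nonnegativity of conditional mutual information,
`I(Y1 : Z) ≤ I((X1, Z) : Y1)`, so the hypothesis bounds `I(Y1 : Z)` by
`H(Z | X0) = H(Z) - I(X0 : Z)`. The terms `I(Y0 : Z)` and `I(X1 : Z)` only help, being nonnegative.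

Restricting `μ` to the fibres of `Z` turns `I(X : Y | Z)` into a sum of terms `I(X : Y) + m log m`,
where `m` is the mass of the fibre: the restricted measures are not normalised. Each term is
nonnegative by Gibbs' inequality for the joint weights against the product of their marginals
divided by `m`.
-/

lemma sub_le_mul_log_sub_mul_log {p q : ℝ} (hp : 0 ≤ p) (hq : 0 ≤ q) (hpq : q = 0 → p = 0) :
    p - q ≤ p * Real.log p - p * Real.log q := by
  rcases hp.eq_or_lt with rfl | hp'
  · simpa using hq
  have hq' : 0 < q := hq.lt_of_ne fun h => hp'.ne' (hpq h.symm)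
  calc p - q = p * (1 - (p / q)⁻¹) := by field_simp
    _ ≤ p * Real.log (p / q) :=
      mul_le_mul_of_nonneg_left (Real.one_sub_inv_le_log_of_pos (div_pos hp' hq')) hp
    _ = p * Real.log p - p * Real.log q := by rw [Real.log_div hp'.ne' hq'.ne', mul_sub]

lemma sum_negMulLog_le_neg_sum_mul_log {ι : Type*} {s : Finset ι} {p q : ι → ℝ}
    (hp : ∀ i ∈ s, 0 ≤ p i) (hq : ∀ i ∈ s, 0 ≤ q i) (hpq : ∀ i ∈ s, q i = 0 → p i = 0)
    (hsum : ∑ i ∈ s, q i ≤ ∑ i ∈ s, p i) :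
    ∑ i ∈ s, Real.negMulLog (p i) ≤ -∑ i ∈ s, p i * Real.log (q i) := by
  have key := Finset.sum_le_sum fun i hi =>
    sub_le_mul_log_sub_mul_log (hp i hi) (hq i hi) (hpq i hi)
  simp only [Finset.sum_sub_distrib] at key
  simp only [Real.negMulLog, neg_mul, Finset.sum_neg_distrib]
  linarith

lemma mul_log_mul_div {p u v w : ℝ} (hu : u = 0 → p = 0) (hv : v = 0 → p = 0)
    (hw : w = 0 → p = 0) :
    p * Real.log (u * v / w) = p * Real.log u + p * Real.log v - p * Real.log w := by
  rcases eq_or_ne p 0 with rfl | hp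
  · simp
  have hu' := mt hu hp
  have hv' := mt hv hp
  rw [Real.log_div (mul_ne_zero hu' hv') (mt hw hp), Real.log_mul hu' hv']
  ring

lemma sum_mul_log_mul_div {α β : Type*} [Fintype α] [Fintype β] {p : α → β → ℝ}
    {u : α → ℝ} {v : β → ℝ} {w : ℝ} (hu : ∀ a b, u a = 0 → p a b = 0)
    (hv : ∀ a b, v b = 0 → p a b = 0) (hw : ∀ a b, w = 0 → p a b = 0) :
    ∑ a, ∑ b, p a b * Real.log (u a * v b / w) =
      ∑ a, (∑ b, p a b) * Real.log (u a) + ∑ b, (∑ a, p a b) * Real.log (v b) -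
        (∑ a, ∑ b, p a b) * Real.log w := by
  simp only [mul_log_mul_div (hu _ _) (hv _ _) (hw _ _), Finset.sum_sub_distrib,
    Finset.sum_add_distrib]
  rw [Finset.sum_comm (f := fun a b => p a b * Real.log (v b))]
  simp only [← Finset.sum_mul]

lemma sum_sum_negMulLog_add_negMulLog_sum_sum_le {α β : Type*} [Fintype α] [Fintype β]
    {p : α → β → ℝ} (hp : ∀ a b, 0 ≤ p a b) :
    ∑ a, ∑ b, Real.negMulLog (p a b) + Real.negMulLog (∑ a, ∑ b, p a b) ≤
      ∑ a, Real.negMulLog (∑ b, p a b) + ∑ b, Real.negMulLog (∑ a, p a b) := by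
  set u : α → ℝ := fun a => ∑ b, p a b
  set v : β → ℝ := fun b => ∑ a, p a b
  set w : ℝ := ∑ a, u a
  have u_nonneg : 0 ≤ u := fun a => Fintype.sum_nonneg (hp a)
  have v_nonneg : 0 ≤ v := fun b => Fintype.sum_nonneg fun a => hp a b
  have eq_zero_of_u (a : α) (b : β) (h : u a = 0) : p a b = 0 :=
    congrFun ((Fintype.sum_eq_zero_iff_of_nonneg (hp a)).1 h) b
  have eq_zero_of_v (a : α) (b : β) (h : v b = 0) : p a b = 0 :=
    congrFun ((Fintype.sum_eq_zero_iff_of_nonneg fun a => hp a b).1 h) a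
  have eq_zero_of_w (a : α) (b : β) (h : w = 0) : p a b = 0 :=
    eq_zero_of_u a b (congrFun ((Fintype.sum_eq_zero_iff_of_nonneg u_nonneg).1 h) a)
  have sum_product : ∑ a, ∑ b, u a * v b / w = w := by
    have sum_v : ∑ b, v b = w := Finset.sum_comm
    simp only [← Finset.sum_div, ← Finset.mul_sum, sum_v, ← Finset.sum_mul]
    exact mul_self_div_self w
  have gibbs : ∑ a, ∑ b, Real.negMulLog (p a b) ≤
      -∑ a, ∑ b, p a b * Real.log (u a * v b / w) := by
    simp only [← Fintype.sum_prod_type'] at sum_product ⊢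
    refine sum_negMulLog_le_neg_sum_mul_log (fun i _ => hp i.1 i.2)
      (fun i _ => div_nonneg (mul_nonneg (u_nonneg i.1) (v_nonneg i.2))
        (Fintype.sum_nonneg u_nonneg)) (fun i _ h => ?_) ?_
    · rcases div_eq_zero_iff.1 h with h | h
      · exact (mul_eq_zero.1 h).elim (eq_zero_of_u i.1 i.2) (eq_zero_of_v i.1 i.2)
      · exact eq_zero_of_w i.1 i.2 h
    · exact (sum_product.trans (Fintype.sum_prod_type' p).symm).le
  rw [sum_mul_log_mul_div eq_zero_of_u eq_zero_of_v eq_zero_of_w] at gibbs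
  simp only [Real.negMulLog, neg_mul, Finset.sum_neg_distrib] at gibbs ⊢
  linarith

section Entropy

variable {Ω E F G : Type*} [MeasurableSpace Ω] [Fintype E] [Fintype F] [Fintype G]

lemma entH_comp_of_injective (μ : Measure Ω) (X : Ω → E) {g : E → F} (hg : g.Injective) :
    entH μ (fun ω => g (X ω)) = entH μ X := by
  refine (Fintype.sum_of_injective g hg _ _ (fun f hf => ?_) fun e => ?_).symm
  · have : (fun ω => g (X ω)) ⁻¹' {f} = ∅ :=
      Set.eq_empty_of_forall_notMem fun ω hω => hf ⟨X ω, hω⟩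
    simp [this]
  · have : (fun ω => g (X ω)) ⁻¹' {g e} = X ⁻¹' {e} := Set.ext fun ω => hg.eq_iff
    rw [this]

lemma entH_prodMk_comm (μ : Measure Ω) (X : Ω → E) (Y : Ω → F) :
    entH μ (fun ω => (X ω, Y ω)) = entH μ (fun ω => (Y ω, X ω)) :=
  entH_comp_of_injective μ (fun ω => (Y ω, X ω)) (g := Prod.swap) Prod.swap_injective

lemma entH_prodMk_assoc (μ : Measure Ω) (X : Ω → E) (Y : Ω → F) (Z : Ω → G) :
    entH μ (fun ω => ((X ω, Y ω), Z ω)) = entH μ (fun ω => (X ω, Y ω, Z ω)) :=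
  entH_comp_of_injective μ (fun ω => (X ω, Y ω, Z ω))
    (g := (Equiv.prodAssoc E F G).symm) (Equiv.injective _)

lemma entH_prodMk_right_comm (μ : Measure Ω) (X : Ω → E) (Y : Ω → F) (Z : Ω → G) :
    entH μ (fun ω => ((X ω, Y ω), Z ω)) = entH μ (fun ω => ((X ω, Z ω), Y ω)) :=
  entH_comp_of_injective μ (fun ω => ((X ω, Z ω), Y ω))
    (g := fun t : (E × G) × F => ((t.1.1, t.2), t.1.2))
    (Function.LeftInverse.injective (g := fun t => ((t.1.1, t.2), t.1.2)) fun _ => rfl)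

lemma mutInf_comm (μ : Measure Ω) (X : Ω → E) (Y : Ω → F) : mutInf μ X Y = mutInf μ Y X := by
  rw [mutInf, mutInf, entH_prodMk_comm μ X Y, add_comm (entH μ X)]

lemma mutInf_eq_entH_sub_condEnt (μ : Measure Ω) (X : Ω → E) (Y : Ω → F) :
    mutInf μ X Y = entH μ X - condEnt μ X Y := by
  rw [mutInf, condEnt]
  ring

lemma mutInf_prodMk_left (μ : Measure Ω) (X : Ω → E) (Y : Ω → F) (Z : Ω → G) :
    mutInf μ (fun ω => (X ω, Z ω)) Y = mutInf μ Z Y + condMutInf μ X Y Z := by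
  rw [mutInf, mutInf, condMutInf, entH_prodMk_right_comm μ X Z Y, entH_prodMk_assoc μ X Y Z,
    entH_prodMk_comm μ Z Y]
  ring

lemma entH_prodMk (μ : Measure Ω) (X : Ω → E) (Y : Ω → F) :
    entH μ (fun ω => (X ω, Y ω)) =
      ∑ e, ∑ f, Real.negMulLog (μ.real (X ⁻¹' {e} ∩ Y ⁻¹' {f})) := by
  simp only [entH, Fintype.sum_prod_type, ← Set.singleton_prod_singleton, Set.mk_preimage_prod,
    measureReal_def]

end Entropy

section Nonnegativity

variable {Ω E F G : Type*} [MeasurableSpace Ω] {μ : Measure Ω}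
  [Fintype E] [MeasurableSpace E] [MeasurableSingletonClass E]
  [Fintype F] [MeasurableSpace F] [MeasurableSingletonClass F] [Fintype G]
  {X : Ω → E} {Y : Ω → F}

lemma entH_prodMk_eq_sum_entH_restrict (hX : Measurable X) (Z : Ω → G) :
    entH μ (fun ω => (X ω, Z ω)) = ∑ g, entH (μ.restrict (Z ⁻¹' {g})) X := by
  rw [entH_prodMk, Finset.sum_comm]
  simp only [entH, measureReal_def, Measure.restrict_apply (hX (measurableSet_singleton _))]

lemma condMutInf_eq_sum_mutInf_restrict (hX : Measurable X) (hY : Measurable Y) (Z : Ω → G) :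
    condMutInf μ X Y Z = ∑ g, (mutInf (μ.restrict (Z ⁻¹' {g})) X Y -
      Real.negMulLog (μ.real (Z ⁻¹' {g}))) := by
  simp only [mutInf, Finset.sum_sub_distrib, Finset.sum_add_distrib]
  rw [condMutInf, ← entH_prodMk_assoc, entH_prodMk_eq_sum_entH_restrict hX,
    entH_prodMk_eq_sum_entH_restrict hY, entH_prodMk_eq_sum_entH_restrict (hX.prodMk hY)]
  rfl

lemma sum_measureReal_inter_preimage_singleton [IsFiniteMeasure μ] (hX : Measurable X)
    (s : Set Ω) : ∑ e, μ.real (s ∩ X ⁻¹' {e}) = μ.real s := by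
  have h := sum_measureReal_preimage_singleton (μ := μ.restrict s) Finset.univ
    fun e _ => hX (measurableSet_singleton e)
  simpa [measureReal_restrict_apply (hX (measurableSet_singleton _)), Set.inter_comm s] using h

lemma negMulLog_measureReal_univ_le_mutInf [IsFiniteMeasure μ] (hX : Measurable X)
    (hY : Measurable Y) : Real.negMulLog (μ.real Set.univ) ≤ mutInf μ X Y := by
  have marginal_X (e : E) : ∑ f, μ.real (X ⁻¹' {e} ∩ Y ⁻¹' {f}) = μ.real (X ⁻¹' {e}) :=
    sum_measureReal_inter_preimage_singleton hY _
  have marginal_Y (f : F) : ∑ e, μ.real (X ⁻¹' {e} ∩ Y ⁻¹' {f}) = μ.real (Y ⁻¹' {f}) := by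
    simpa only [Set.inter_comm] using sum_measureReal_inter_preimage_singleton hX (Y ⁻¹' {f})
  have total : ∑ e, μ.real (X ⁻¹' {e}) = μ.real Set.univ := by
    simpa only [Set.univ_inter] using sum_measureReal_inter_preimage_singleton hX Set.univ
  have subadditivity := sum_sum_negMulLog_add_negMulLog_sum_sum_le
    (p := fun e f => μ.real (X ⁻¹' {e} ∩ Y ⁻¹' {f})) fun _ _ => measureReal_nonneg
  simp only [marginal_X, marginal_Y, total, ← entH_prodMk] at subadditivity
  rw [mutInf]
  exact le_sub_iff_add_le'.2 subadditivity

lemma mutInf_nonneg [IsProbabilityMeasure μ] (hX : Measurable X) (hY : Measurable Y) :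
    0 ≤ mutInf μ X Y := by
  simpa using negMulLog_measureReal_univ_le_mutInf (μ := μ) hX hY

lemma condMutInf_nonneg [IsFiniteMeasure μ] (hX : Measurable X) (hY : Measurable Y)
    (Z : Ω → G) : 0 ≤ condMutInf μ X Y Z := by
  rw [condMutInf_eq_sum_mutInf_restrict hX hY]
  refine Finset.sum_nonneg fun g _ => sub_nonneg.2 ?_
  simpa using negMulLog_measureReal_univ_le_mutInf (μ := μ.restrict (Z ⁻¹' {g})) hX hY

lemma mutInf_le_mutInf_prodMk_left [IsFiniteMeasure μ] (hX : Measurable X) (hY : Measurable Y)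
    (Z : Ω → G) : mutInf μ Z Y ≤ mutInf μ (fun ω => (X ω, Z ω)) Y := by
  rw [mutInf_prodMk_left]
  exact le_add_of_nonneg_right (condMutInf_nonneg hX hY Z)

end Nonnegativity

/-- **Pienaar's post-selected entropy inequality**: for any jointly distributed
finite random variables `X0, X1, Y0, Y1, Z` satisfying
`I((X1, Z) : Y1) ≤ H(Z | X0)`, one has
`I(X0:Z) - I(Y0:Z) - I(X1:Z) + I(Y1:Z) ≤ H(Z)`. -/
theorem pienaar_inequality {Ω E0 E1 F0 F1 G : Type*} [MeasurableSpace Ω]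
    [Fintype E0] [Fintype E1] [Fintype F0] [Fintype F1] [Fintype G]
    [MeasurableSpace E0] [MeasurableSingletonClass E0]
    [MeasurableSpace E1] [MeasurableSingletonClass E1]
    [MeasurableSpace F0] [MeasurableSingletonClass F0]
    [MeasurableSpace F1] [MeasurableSingletonClass F1]
    [MeasurableSpace G] [MeasurableSingletonClass G]
    (μ : Measure Ω) [IsProbabilityMeasure μ]
    (X0 : Ω → E0) (X1 : Ω → E1) (Y0 : Ω → F0) (Y1 : Ω → F1) (Z : Ω → G)
    (hX0 : Measurable X0) (hX1 : Measurable X1)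
    (hY0 : Measurable Y0) (hY1 : Measurable Y1) (hZ : Measurable Z)
    (hyp : mutInf μ (fun ω => (X1 ω, Z ω)) Y1 ≤ condEnt μ Z X0) :
    mutInf μ X0 Z - mutInf μ Y0 Z - mutInf μ X1 Z + mutInf μ Y1 Z ≤ entH μ Z := by
  have data_processing : mutInf μ Y1 Z ≤ mutInf μ (fun ω => (X1 ω, Z ω)) Y1 :=
    (mutInf_comm μ Y1 Z).trans_le (mutInf_le_mutInf_prodMk_left hX1 hY1 Z)
  have mutInf_X0_Z : mutInf μ X0 Z = entH μ Z - condEnt μ Z X0 := by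
    rw [mutInf_comm, mutInf_eq_entH_sub_condEnt]
  linarith [mutInf_nonneg (μ := μ) hY0 hZ, mutInf_nonneg (μ := μ) hX1 hZ]
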